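/- Suppose P has regularly varying tails: there exist α ∈ (0,1) and a function L : (0,∞) → (0,∞) slowly varying at infinity (i.e. L(tz)/L(t) → 1 as t → ∞ for every z > 0) such that F̄_P(x)/(x^{−α} L(1/x)) → 1 as x → 0. Then for every r ≥ 1, √(n^α L(n)) · ℓ(θ̂_r^{GT}(X_n), θ_r(P;X_n)) = O_P(1) as n → ∞; that is, for every δ > 0 there exist M > 0 and N ≥ 1 such that for all n ≥ N, P_P( √(n^α L(n)) · ℓ(θ̂_r^{GT}(X_n), θ_r(P;X_n)) > M ) ≤ δ. -/

import Mathlib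

open MeasureTheory ProbabilityTheory Real Filter

noncomputable section

/-- The law of an i.i.d. sample of size `n` from the discrete distribution `P` on `ℕ`. -/
def sampleMeasure (P : PMF ℕ) (n : ℕ) : Measure (Fin n → ℕ) :=
  Measure.pi fun _ => P.toMeasure

/-- The probability mass of symbol `j` under `P`, as a real number. -/
def pReal (P : PMF ℕ) (j : ℕ) : ℝ := (P j).toReal

/-- Empirical frequency of the symbol `j` in the sample `ω`. -/
def freq {n : ℕ} (ω : Fin n → ℕ) (j : ℕ) : ℕ :=
  (Finset.univ.filter fun i => ω i = j).card

/-- The `r`-order missing mass `θ_r(P; X_n)`. -/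
def missingMass (p : ℕ → ℝ) (r : ℕ) {n : ℕ} (ω : Fin n → ℕ) : ℝ :=
  ∑' j, p j ^ r * (if freq ω j = 0 then 1 else 0)

/-- `M_{n,r}`: the number of distinct symbols appearing exactly `r` times in the sample. -/
def Mcount {n : ℕ} (ω : Fin n → ℕ) (r : ℕ) : ℝ :=
  ∑' j, if freq ω j = r then 1 else 0

/-- The Good–Turing-type estimator `θ̂_r^{GT}(X_n) = M_{n,r} / (n choose r)`. -/
def gtEst {n : ℕ} (ω : Fin n → ℕ) (r : ℕ) : ℝ := Mcount ω r / (n.choose r)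

/-- The multiplicative (relative) loss: `ℓ(t, θ) = |t/θ - 1|` if `θ > 0`, and `h t` otherwise. -/
def mloss (h : ℝ → ℝ) (t θ : ℝ) : ℝ := if 0 < θ then |t / θ - 1| else h t

/-- The tail function `F̄_P(x) = #{j : p_j > x}`. -/
def tailF (P : PMF ℕ) (x : ℝ) : ℕ := Set.ncard {j | x < pReal P j}

/-!
Write `F = F̄_P(1/n)`; regular variation with index `α` makes `n ^ α L(n)` of the order of `F`, so
it suffices to show that `n ^ r θ_r` is at least of order `F` and that `n ^ r (θ̂_r - θ_r)` is at
most of order `√F`, both in probability.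

The error is a sum over the symbols `j` of `C(n,r)⁻¹ 1(Y_j = r) - p_j ^ r 1(Y_j = 0)`. For distinct
symbols the product of two such terms has expectation `p_i ^ r p_j ^ r (1 - p_i - p_j) ^ (n - 2r)`
times a factor which by Bernoulli's inequality is at most quadratic in `p_i + p_j`. Hence the second
moment is controlled by the sums `∑ p_j ^ k (1 - p_j) ^ (n - 2r)`, which are of order at most
`F / n ^ k`: there are `F` symbols with `p_j > 1/n`, each contributing `O(n ^ (-k))`, and because
`α < 1` the others have total mass `O(F / n)`.

Because `α > 0`, there is a constant `c` with `F̄_P(c/n) ≥ 2 F` for large `n`, which means that at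
least `F` symbols satisfy `c/n < p_j ≤ 1/n`. Each is unseen with probability bounded below, and
unseen indicators are negatively correlated, so by Chebyshev's inequality a fixed proportion of
them is unseen with high probability. Each of these adds at least `(c/n) ^ r` to `θ_r`.
-/
section Masses

variable {P : PMF ℕ}

theorem pReal_nonneg (j : ℕ) : 0 ≤ pReal P j :=
  ENNReal.toReal_nonneg

theorem hasSum_pReal : HasSum (pReal P) 1 := by
  have h := ENNReal.hasSum_toReal (f := fun j => P j) P.tsum_coe_ne_top
  rwa [← ENNReal.tsum_toReal_eq P.apply_ne_top, P.tsum_coe, ENNReal.toReal_one] at h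

theorem sum_pReal_le_one (J : Finset ℕ) : ∑ j ∈ J, pReal P j ≤ 1 :=
  sum_le_hasSum J (fun i _ => pReal_nonneg i) hasSum_pReal

theorem pReal_le_one (j : ℕ) : pReal P j ≤ 1 := by
  simpa using sum_pReal_le_one (P := P) {j}

theorem one_sub_pReal_nonneg (j : ℕ) : 0 ≤ 1 - pReal P j :=
  sub_nonneg.2 (pReal_le_one j)

theorem pReal_add_le_one {i j : ℕ} (hij : i ≠ j) : pReal P i + pReal P j ≤ 1 := by
  simpa [Finset.sum_pair hij] using sum_pReal_le_one (P := P) {i, j}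

theorem toMeasure_real_singleton (j : ℕ) : P.toMeasure.real {j} = pReal P j := by
  rw [Measure.real, PMF.toMeasure_apply_singleton _ _ (measurableSet_singleton j), pReal]

end Masses

section Tail

open Topology

variable {P : PMF ℕ} {x y : ℝ}

theorem finite_setOf_lt_pReal (hx : 0 < x) : {j | x < pReal P j}.Finite := by
  have h := (hasSum_pReal (P := P)).summable.tendsto_cofinite_zero.eventually (gt_mem_nhds hx)
  exact (eventually_cofinite.1 h).subset fun j hj => not_lt.2 (le_of_lt hj)

theorem card_le_tailF (hx : 0 < x) {J : Finset ℕ} (hJ : ∀ j ∈ J, x < pReal P j) :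
    J.card ≤ tailF P x := by
  rw [← Set.ncard_coe_finset]
  exact Set.ncard_le_ncard hJ (finite_setOf_lt_pReal hx)

theorem mul_tailF_le_one (hx : 0 < x) : x * tailF P x ≤ 1 := by
  have hfin := finite_setOf_lt_pReal (P := P) hx
  refine le_trans ?_ (sum_pReal_le_one (P := P) hfin.toFinset)
  rw [tailF, Set.ncard_eq_toFinset_card _ hfin, mul_comm, ← nsmul_eq_mul]
  exact Finset.card_nsmul_le_sum _ _ _ fun j hj => (hfin.mem_toFinset.1 hj).le

theorem exists_finset_tailF_le_add_card (hx : 0 < x) (hy : 0 < y) :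
    ∃ S : Finset ℕ, (∀ j ∈ S, y < pReal P j ∧ pReal P j ≤ x) ∧
      tailF P y ≤ tailF P x + S.card := by
  have hfin : ({j | y < pReal P j} \ {j | x < pReal P j}).Finite :=
    (finite_setOf_lt_pReal hy).sdiff
  refine ⟨hfin.toFinset, fun j hj => ?_, ?_⟩
  · have hj := hfin.mem_toFinset.1 hj
    exact ⟨hj.1, not_lt.1 hj.2⟩
  · rw [← Set.ncard_eq_toFinset_card _ hfin, add_comm]
    exact Set.ncard_le_ncard_sdiff_add_ncard _ _ (finite_setOf_lt_pReal hx)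

theorem eventually_tailF_pos : ∀ᶠ x in 𝓝[>] 0, 0 < tailF P x := by
  obtain ⟨j, hj⟩ : ∃ j, 0 < pReal P j := by
    by_contra! h
    have hzero : pReal P = 0 := funext fun j => (h j).antisymm (pReal_nonneg j)
    exact zero_ne_one (hasSum_zero.unique (hzero ▸ hasSum_pReal (P := P)))
  filter_upwards [Ioo_mem_nhdsGT hj] with x hx
  exact card_le_tailF (J := {j}) hx.1 (by simpa using hx.2)

theorem tendsto_const_mul_nhdsGT_zero {z : ℝ} (hz : 0 < z) :
    Tendsto (fun x => z * x) (𝓝[>] 0) (𝓝[>] 0) :=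
  tendsto_iff_comap.2 (comap_mulLeft_nhdsGT_zero hz).ge

theorem tendsto_natCast_inv_nhdsGT_zero : Tendsto (fun n : ℕ => (n : ℝ)⁻¹) atTop (𝓝[>] 0) :=
  tendsto_inv_atTop_nhdsGT_zero.comp tendsto_natCast_atTop_atTop

/-- The tail has positive lower index of variation at `0`: it doubles when its argument is
scaled down by a fixed factor. -/
def TailGrows (P : PMF ℕ) : Prop :=
  ∃ c > 0, ∀ᶠ x in 𝓝[>] 0, 2 * tailF P x ≤ tailF P (c * x)

/-- The tail has upper index of variation at `0` less than `1`: `x * F̄_P(x)` contracts when `x` is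
scaled down by a fixed factor `b < 1`. -/
def TailSublinear (P : PMF ℕ) : Prop :=
  ∃ b ∈ Set.Ioo (0 : ℝ) 1, ∃ q < (1 : ℝ), ∀ᶠ x in 𝓝[>] 0,
    b * x * tailF P (b * x) ≤ q * (x * tailF P x)

theorem TailGrows.tendsto_tailF (hP : TailGrows P) : Tendsto (tailF P) (𝓝[>] 0) atTop := by
  obtain ⟨c, hc, hdouble⟩ := hP
  refine tendsto_atTop.2 fun b => ?_
  induction b with
  | zero => exact Eventually.of_forall fun _ => Nat.zero_le _
  | succ b ih =>
    have hscaled : ∀ᶠ x in 𝓝[>] 0, b + 1 ≤ tailF P (c * x) := by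
      filter_upwards [ih, hdouble, eventually_tailF_pos (P := P)] with x hb h2 hpos
      lia
    filter_upwards [(tendsto_const_mul_nhdsGT_zero (inv_pos.2 hc)).eventually hscaled] with x hx
    rwa [mul_inv_cancel_left₀ hc.ne'] at hx

theorem TailGrows.exists_finset (hP : TailGrows P) :
    ∃ c > 0, ∀ᶠ x in 𝓝[>] 0, ∃ S : Finset ℕ,
      (∀ j ∈ S, c * x < pReal P j ∧ pReal P j ≤ x) ∧ tailF P x ≤ S.card := by
  obtain ⟨c, hc, hdouble⟩ := hP
  refine ⟨c, hc, ?_⟩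
  filter_upwards [hdouble, self_mem_nhdsWithin] with x h2 hx
  obtain ⟨S, hS, hcard⟩ := exists_finset_tailF_le_add_card (P := P) hx (mul_pos hc hx)
  exact ⟨S, hS, by lia⟩

theorem sum_pReal_filter_le_add {b : ℝ} (hx : 0 < x) (hb : 0 < b) (J : Finset ℕ) :
    ∑ j ∈ J with pReal P j ≤ x, pReal P j ≤
      x * tailF P (b * x) + ∑ j ∈ J with pReal P j ≤ b * x, pReal P j := by
  rw [← Finset.sum_filter_add_sum_filter_not _ (b * x < pReal P ·), Finset.filter_filter]
  gcongr ?_ + ?_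
  · calc ∑ j ∈ J with pReal P j ≤ x ∧ b * x < pReal P j, pReal P j
        ≤ (J.filter fun j => pReal P j ≤ x ∧ b * x < pReal P j).card • x :=
          Finset.sum_le_card_nsmul _ _ _ fun j hj => (Finset.mem_filter.1 hj).2.1
      _ ≤ x * tailF P (b * x) := by
          rw [nsmul_eq_mul, mul_comm]
          gcongr
          exact card_le_tailF (mul_pos hb hx) fun j hj => (Finset.mem_filter.1 hj).2.2
  · refine Finset.sum_le_sum_of_subset_of_nonneg (fun j hj => ?_) fun j _ _ => pReal_nonneg j
    simp only [Finset.mem_filter, not_lt] at hj ⊢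
    exact ⟨hj.1.1, hj.2⟩

-- The constant `K = (b * (1 - q))⁻¹` solves `q / b + q * K ≤ K`, so that `K * (x * F̄ x)` absorbs
-- the mass of the symbols with `b * x < p ≤ x`.
theorem sum_pReal_filter_sub_le {b q : ℝ} (hx : 0 < x) (hb : 0 < b) (hq : q < 1)
    (hcontr : b * x * tailF P (b * x) ≤ q * (x * tailF P x)) (J : Finset ℕ) :
    ∑ j ∈ J with pReal P j ≤ x, pReal P j - (b * (1 - q))⁻¹ * (x * tailF P x) ≤
      ∑ j ∈ J with pReal P j ≤ b * x, pReal P j -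
        (b * (1 - q))⁻¹ * (b * x * tailF P (b * x)) := by
  have hq' : 0 < 1 - q := sub_pos.2 hq
  set K := (b * (1 - q))⁻¹ with hK
  have habsorb : x * tailF P (b * x) + K * (b * x * tailF P (b * x)) ≤ K * (x * tailF P x) :=
    calc x * tailF P (b * x) + K * (b * x * tailF P (b * x))
        = (b⁻¹ + K) * (b * x * tailF P (b * x)) := by field_simp
      _ ≤ (b⁻¹ + K) * (q * (x * tailF P x)) :=
        mul_le_mul_of_nonneg_left hcontr (by positivity)
      _ = (K - b⁻¹ * (1 - q)) * (x * tailF P x) := by rw [hK]; field_simp; ring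
      _ ≤ K * (x * tailF P x) := by
        gcongr
        exact sub_le_self _ (by positivity)
  linarith [sum_pReal_filter_le_add (P := P) hx hb J]

theorem sum_pReal_filter_le {b q : ℝ} (hx : 0 < x) (hb : b ∈ Set.Ioo 0 1) (hq : q < 1)
    (hcontr : ∀ y ∈ Set.Ioc 0 x, b * y * tailF P (b * y) ≤ q * (y * tailF P y)) (J : Finset ℕ) :
    ∑ j ∈ J with pReal P j ≤ x, pReal P j ≤ (b * (1 - q))⁻¹ * (x * tailF P x) := by
  obtain ⟨hb0, hb1⟩ := hb
  set K := (b * (1 - q))⁻¹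
  have hK : 0 ≤ K := inv_nonneg.2 (mul_nonneg hb0.le (sub_nonneg.2 hq.le))
  set S : ℝ → ℝ := fun y => ∑ j ∈ J with pReal P j ≤ y, pReal P j
  have htelescope (N : ℕ) :
      S x - K * (x * tailF P x) ≤ S (b ^ N * x) - K * (b ^ N * x * tailF P (b ^ N * x)) := by
    induction N with
    | zero => simp
    | succ N ih =>
      have hmem : b ^ N * x ∈ Set.Ioc 0 x :=
        ⟨by positivity, mul_le_of_le_one_left hx.le (pow_le_one₀ hb0.le hb1.le)⟩
      rw [pow_succ', mul_assoc b]
      exact ih.trans (sum_pReal_filter_sub_le hmem.1 hb0 hq (hcontr _ hmem) J)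
  have hremainder (N : ℕ) : S x - K * (x * tailF P x) ≤ J.card * (b ^ N * x) :=
    calc S x - K * (x * tailF P x)
        ≤ S (b ^ N * x) - K * (b ^ N * x * tailF P (b ^ N * x)) := htelescope N
      _ ≤ S (b ^ N * x) := sub_le_self _ (mul_nonneg hK (by positivity))
      _ ≤ (J.filter (pReal P · ≤ b ^ N * x)).card • (b ^ N * x) :=
        Finset.sum_le_card_nsmul _ _ _ fun j hj => (Finset.mem_filter.1 hj).2
      _ ≤ J.card * (b ^ N * x) := by
        rw [nsmul_eq_mul]
        gcongr
        exact Finset.filter_subset _ _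
  have hlim : Tendsto (fun N : ℕ => J.card * (b ^ N * x)) atTop (𝓝 0) := by
    simpa using ((tendsto_pow_atTop_nhds_zero_of_lt_one hb0.le hb1).mul_const x).const_mul
      (J.card : ℝ)
  exact sub_nonpos.1 (ge_of_tendsto' hlim hremainder)

theorem TailSublinear.exists_sum_pReal_filter_le (hP : TailSublinear P) :
    ∃ K : ℝ, ∀ᶠ x in 𝓝[>] 0, ∀ J : Finset ℕ,
      ∑ j ∈ J with pReal P j ≤ x, pReal P j ≤ K * (x * tailF P x) := by
  obtain ⟨b, hb, q, hq, hcontr⟩ := hP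
  obtain ⟨x₀, hx₀, hsub⟩ := mem_nhdsGT_iff_exists_Ioc_subset.1 hcontr
  refine ⟨(b * (1 - q))⁻¹, ?_⟩
  filter_upwards [Ioc_mem_nhdsGT hx₀] with x hx J
  exact sum_pReal_filter_le hx.1 hb hq (fun y hy => hsub ⟨hy.1, hy.2.trans hx.2⟩) J

end Tail

section RegularVariation

open Topology Asymptotics

variable {f L : ℝ → ℝ} {α : ℝ}

theorem tendsto_div_of_slowlyVarying
    (hSlow : ∀ z > 0, Tendsto (fun t => L (t * z) / L t) atTop (𝓝 1))
    (hf : Tendsto (fun x => f x / (x ^ (-α) * L (1 / x))) (𝓝[>] 0) (𝓝 1)) {z : ℝ} (hz : 0 < z) :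
    Tendsto (fun x => f (z * x) / f x) (𝓝[>] 0) (𝓝 (z ^ (-α))) := by
  set g : ℝ → ℝ := fun x => x ^ (-α) * L (1 / x)
  have hscale := tendsto_const_mul_nhdsGT_zero hz
  have hg : Tendsto (fun x => g (z * x) / g x) (𝓝[>] 0) (𝓝 (z ^ (-α))) := by
    have hL := ((hSlow z⁻¹ (inv_pos.2 hz)).comp tendsto_inv_nhdsGT_zero).const_mul (z ^ (-α))
    rw [mul_one] at hL
    refine hL.congr' ?_
    filter_upwards [self_mem_nhdsWithin] with x hx
    have hxα := (rpow_pos_of_pos hx (-α)).ne'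
    simp only [g, Function.comp_apply, one_div, mul_inv_rev, mul_rpow hz.le (le_of_lt hx)]
    field_simp
  have hlim := ((hf.comp hscale).mul hg).div hf one_ne_zero
  rw [one_mul, div_one] at hlim
  refine hlim.congr' ?_
  filter_upwards [hf.eventually_ne one_ne_zero,
    (hf.comp hscale).eventually_ne one_ne_zero] with x hx hzx
  have hgx : g x ≠ 0 := (div_ne_zero_iff.1 hx).2
  have hgzx : g (z * x) ≠ 0 := (div_ne_zero_iff.1 hzx).2
  have hfx : f x ≠ 0 := (div_ne_zero_iff.1 hx).1
  simp only [Pi.div_apply, Function.comp_apply]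
  change f (z * x) / g (z * x) * (g (z * x) / g x) / (f x / g x) = _
  field_simp

theorem isBigO_natCast_inv_of_tendsto_div
    (hf : Tendsto (fun x => f x / (x ^ (-α) * L (1 / x))) (𝓝[>] 0) (𝓝 1)) :
    (fun n : ℕ => (n : ℝ) ^ α * L n) =O[atTop] fun n => f (n : ℝ)⁻¹ := by
  refine (isEquivalent_of_tendsto_one ?_).isBigO_symm
  refine (hf.comp tendsto_natCast_inv_nhdsGT_zero).congr fun n => ?_
  simp [inv_rpow, rpow_neg]

variable {P : PMF ℕ}

theorem tailGrows_of_tendsto_div (hα : 0 < α)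
    (hP : ∀ z > 0, Tendsto (fun x => (tailF P (z * x) : ℝ) / tailF P x) (𝓝[>] 0) (𝓝 (z ^ (-α)))) :
    TailGrows P := by
  have hc : (0 : ℝ) < 3 ^ (-α⁻¹) := by positivity
  refine ⟨3 ^ (-α⁻¹), hc, ?_⟩
  have hlim : ((3 : ℝ) ^ (-α⁻¹)) ^ (-α) = 3 := by
    rw [← rpow_mul zero_le_three, neg_mul_neg, inv_mul_cancel₀ hα.ne', rpow_one]
  filter_upwards [(hP _ hc).eventually_const_lt (hlim ▸ (by norm_num : (2 : ℝ) < 3)),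
    eventually_tailF_pos] with x hx hpos
  have := (lt_div_iff₀ (by exact_mod_cast hpos)).1 hx
  exact_mod_cast this.le

theorem tailSublinear_of_tendsto_div (hα : α < 1)
    (hP : ∀ z > 0, Tendsto (fun x => (tailF P (z * x) : ℝ) / tailF P x) (𝓝[>] 0) (𝓝 (z ^ (-α)))) :
    TailSublinear P := by
  have hexp : (2⁻¹ : ℝ) * 2⁻¹ ^ (-α) < 1 := by
    rw [← rpow_one_add' (by norm_num) (by linarith)]
    exact rpow_lt_one (by norm_num) (by norm_num) (by linarith)
  obtain ⟨q, hq, hq1⟩ := exists_between hexp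
  refine ⟨2⁻¹, by norm_num, q, hq1, ?_⟩
  filter_upwards [((hP 2⁻¹ (by norm_num)).const_mul 2⁻¹).eventually_lt_const hq,
    eventually_tailF_pos, self_mem_nhdsWithin] with x hx hpos hx0
  rw [← mul_div_assoc, div_lt_iff₀ (by exact_mod_cast hpos)] at hx
  have hx0 : 0 < x := hx0
  calc 2⁻¹ * x * tailF P (2⁻¹ * x) = x * (2⁻¹ * tailF P (2⁻¹ * x)) := by ring
    _ ≤ x * (q * tailF P x) := by gcongr
    _ = q * (x * tailF P x) := by ring

end RegularVariation

section ExpMissingMass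

open Asymptotics
open scoped Nat

theorem mul_pow_mul_one_sub_pow_le (k m : ℕ) {x : ℝ} (hx0 : 0 ≤ x) (hx1 : x ≤ 1) :
    (m * x) ^ k * (1 - x) ^ m ≤ k ! := by
  have hpow : (m * x) ^ k ≤ k ! * exp (m * x) := by
    rw [← div_le_iff₀' (by positivity)]
    exact pow_div_factorial_le_exp _ (by positivity) k
  have hexp : (1 - x) ^ m ≤ exp (-(m * x)) := by
    rw [← mul_neg, exp_nat_mul]
    exact pow_le_pow_left₀ (sub_nonneg.2 hx1) (one_sub_le_exp_neg x) m
  calc (m * x) ^ k * (1 - x) ^ m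
      ≤ k ! * exp (m * x) * exp (-(m * x)) :=
        mul_le_mul hpow hexp (pow_nonneg (sub_nonneg.2 hx1) m) (by positivity)
    _ = k ! := by rw [mul_assoc, ← exp_add, add_neg_cancel, exp_zero, mul_one]

variable {P : PMF ℕ} {k m n : ℕ}

/-- The expected `k`-order missing mass of a sample of size `m`. -/
def expMissingMass (P : PMF ℕ) (k m : ℕ) : ℝ :=
  ∑' j, pReal P j ^ k * (1 - pReal P j) ^ m

theorem pReal_pow_mul_one_sub_pow_nonneg (j : ℕ) : 0 ≤ pReal P j ^ k * (1 - pReal P j) ^ m :=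
  mul_nonneg (pow_nonneg (pReal_nonneg j) k) (pow_nonneg (one_sub_pReal_nonneg j) m)

theorem pReal_pow_mul_one_sub_pow_le_pReal (hk : k ≠ 0) (j : ℕ) :
    pReal P j ^ k * (1 - pReal P j) ^ m ≤ pReal P j :=
  (mul_le_of_le_one_right (pow_nonneg (pReal_nonneg j) k)
    (pow_le_one₀ (one_sub_pReal_nonneg j) (sub_le_self 1 (pReal_nonneg j)))).trans
      (pow_le_of_le_one (pReal_nonneg j) (pReal_le_one j) hk)

theorem expMissingMass_nonneg : 0 ≤ expMissingMass P k m :=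
  tsum_nonneg fun j => pReal_pow_mul_one_sub_pow_nonneg j

theorem sum_le_expMissingMass (hk : k ≠ 0) (J : Finset ℕ) :
    ∑ j ∈ J, pReal P j ^ k * (1 - pReal P j) ^ m ≤ expMissingMass P k m :=
  (Summable.of_nonneg_of_le (fun j => pReal_pow_mul_one_sub_pow_nonneg j)
    (fun j => pReal_pow_mul_one_sub_pow_le_pReal hk j) hasSum_pReal.summable).sum_le_tsum J
      fun j _ => pReal_pow_mul_one_sub_pow_nonneg j

theorem mul_pReal_pow_mul_one_sub_pow_le (hk : k ≠ 0) (hnm : n ≤ 2 * m) (j : ℕ) :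
    (n * pReal P j) ^ k * (1 - pReal P j) ^ m ≤
      if pReal P j ≤ (n : ℝ)⁻¹ then n * pReal P j else 2 ^ k * k ! := by
  have hp := pReal_nonneg (P := P) j
  have hp1 := one_sub_pReal_nonneg (P := P) j
  split_ifs with hj
  · have hnp : n * pReal P j ≤ 1 :=
      (mul_le_mul_of_nonneg_left hj n.cast_nonneg).trans (mul_inv_le_one)
    calc (n * pReal P j) ^ k * (1 - pReal P j) ^ m
        ≤ (n * pReal P j) ^ k :=
          mul_le_of_le_one_right (by positivity) (pow_le_one₀ hp1 (sub_le_self 1 hp))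
      _ ≤ n * pReal P j := pow_le_of_le_one (by positivity) hnp hk
  · have hnm : (n : ℝ) ≤ 2 * m := mod_cast hnm
    calc (n * pReal P j) ^ k * (1 - pReal P j) ^ m
        ≤ (2 * m * pReal P j) ^ k * (1 - pReal P j) ^ m := by gcongr
      _ = 2 ^ k * ((m * pReal P j) ^ k * (1 - pReal P j) ^ m) := by ring
      _ ≤ 2 ^ k * k ! := by
        gcongr
        exact mul_pow_mul_one_sub_pow_le k m hp (pReal_le_one j)

theorem pow_mul_expMissingMass_le {K : ℝ} (hk : k ≠ 0) (hn : 0 < n) (hnm : n ≤ 2 * m)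
    (hK : ∀ J : Finset ℕ, ∑ j ∈ J with pReal P j ≤ (n : ℝ)⁻¹, pReal P j ≤
      K * ((n : ℝ)⁻¹ * tailF P (n : ℝ)⁻¹)) :
    n ^ k * expMissingMass P k m ≤ (K + 2 ^ k * k !) * tailF P (n : ℝ)⁻¹ := by
  rw [expMissingMass, ← tsum_mul_left]
  refine Real.tsum_le_of_sum_le
    (fun j => mul_nonneg (by positivity) (pReal_pow_mul_one_sub_pow_nonneg j)) fun J => ?_
  simp_rw [← mul_assoc, ← mul_pow]
  calc ∑ j ∈ J, (n * pReal P j) ^ k * (1 - pReal P j) ^ m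
      ≤ ∑ j ∈ J, if pReal P j ≤ (n : ℝ)⁻¹ then n * pReal P j else 2 ^ k * k ! :=
        Finset.sum_le_sum fun j _ => mul_pReal_pow_mul_one_sub_pow_le hk hnm j
    _ = n * ∑ j ∈ J with pReal P j ≤ (n : ℝ)⁻¹, pReal P j +
          (J.filter fun j => ¬pReal P j ≤ (n : ℝ)⁻¹).card * (2 ^ k * k !) := by
        rw [Finset.sum_ite, ← Finset.mul_sum, Finset.sum_const, nsmul_eq_mul]
    _ ≤ n * (K * ((n : ℝ)⁻¹ * tailF P (n : ℝ)⁻¹)) + tailF P (n : ℝ)⁻¹ * (2 ^ k * k !) := by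
        gcongr
        · exact hK J
        · exact card_le_tailF (by positivity) fun j hj => not_le.1 (Finset.mem_filter.1 hj).2
    _ = (K + 2 ^ k * k !) * tailF P (n : ℝ)⁻¹ := by field_simp

theorem TailSublinear.isBigO_expMissingMass (hP : TailSublinear P) (hk : k ≠ 0) (d : ℕ) :
    (fun n => expMissingMass P k (n - d)) =O[atTop]
      fun n : ℕ => (tailF P (n : ℝ)⁻¹ : ℝ) / (n : ℝ) ^ k := by
  obtain ⟨K, hK⟩ := hP.exists_sum_pReal_filter_le
  refine IsBigO.of_bound (K + 2 ^ k * k !) ?_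
  filter_upwards [tendsto_natCast_inv_nhdsGT_zero.eventually hK, eventually_gt_atTop 0,
    eventually_ge_atTop (2 * d)] with n hn hn0 hnd
  rw [norm_of_nonneg expMissingMass_nonneg, norm_of_nonneg (by positivity), ← mul_div_assoc,
    le_div_iff₀' (by positivity)]
  exact pow_mul_expMissingMass_le hk hn0 (by lia) hn

end ExpMissingMass

section JointCounts

variable {ι Ω : Type*} [Fintype ι]

theorem card_sigma_powersetCard_compl [DecidableEq ι] (a b : ℕ) :
    ((Finset.powersetCard a (Finset.univ : Finset ι)).sigma fun A =>
        Finset.powersetCard b Aᶜ).card =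
      (Fintype.card ι).choose a * (Fintype.card ι - a).choose b := by
  rw [Finset.card_sigma, Finset.sum_const_nat, Finset.card_powersetCard, Finset.card_univ]
  intro A hA
  rw [Finset.card_powersetCard, Finset.card_compl, (Finset.mem_powersetCard.1 hA).2]

variable {U V : Set Ω} [DecidablePred (· ∈ U)] [DecidablePred (· ∈ V)]

theorem setOf_filter_mem_eq_pi [DecidableEq ι] (hUV : Disjoint U V) {A B : Finset ι}
    (hAB : Disjoint A B) :
    {ω : ι → Ω | Finset.univ.filter (ω · ∈ U) = A ∧ Finset.univ.filter (ω · ∈ V) = B} =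
      Set.univ.pi fun k => if k ∈ A then U else if k ∈ B then V else (U ∪ V)ᶜ := by
  ext ω
  simp only [Set.mem_ofPred_eq, Finset.ext_iff, Finset.mem_filter_univ, ← forall_and,
    Set.mem_univ_pi]
  refine forall_congr' fun k => ?_
  have hω : ω k ∈ U → ω k ∉ V := fun h => Set.disjoint_left.1 hUV h
  have hk : k ∈ A → k ∉ B := fun h => Finset.disjoint_left.1 hAB h
  split_ifs with hA hB
  · simpa [hA, hk hA] using hω
  · simpa [hA, hB] using fun hV hU => hω hU hV
  · simp [hA, hB]

variable [MeasurableSpace Ω] (μ : Measure Ω) [IsFiniteMeasure μ]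

theorem measureReal_pi_filter_mem_eq (hUV : Disjoint U V) {A B : Finset ι} (hAB : Disjoint A B) :
    (Measure.pi fun _ : ι => μ).real
        {ω | Finset.univ.filter (ω · ∈ U) = A ∧ Finset.univ.filter (ω · ∈ V) = B} =
      μ.real U ^ A.card * μ.real V ^ B.card *
        μ.real (U ∪ V)ᶜ ^ (Fintype.card ι - A.card - B.card) := by
  classical
  have hB : (Finset.univ.filter (· ∉ A)).filter (· ∈ B) = B := by
    ext k
    simpa using fun hkB hkA => Finset.disjoint_left.1 hAB hkA hkB
  have hcompl : (Finset.univ.filter (· ∉ A)).filter (· ∉ B) = (A ∪ B)ᶜ := by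
    ext k
    simp
  rw [setOf_filter_mem_eq_pi hUV hAB, measureReal_def, Measure.pi_pi, ENNReal.toReal_prod]
  simp_rw [← measureReal_def, apply_ite μ.real]
  rw [Finset.prod_ite, Finset.prod_ite, Finset.filter_univ_mem, hB, hcompl]
  simp only [Finset.prod_const, Finset.card_compl, Finset.card_union_of_disjoint hAB,
    Nat.sub_sub, mul_assoc]

theorem measureReal_pi_card_filter_mem_eq (hU : MeasurableSet U) (hV : MeasurableSet V)
    (hUV : Disjoint U V) (a b : ℕ) :
    (Measure.pi fun _ : ι => μ).real {ω | (Finset.univ.filter (ω · ∈ U)).card = a ∧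
        (Finset.univ.filter (ω · ∈ V)).card = b} =
      (Fintype.card ι).choose a * (Fintype.card ι - a).choose b *
        (μ.real U ^ a * μ.real V ^ b * μ.real (U ∪ V)ᶜ ^ (Fintype.card ι - a - b)) := by
  classical
  let positions : (ι → Ω) → Σ _ : Finset ι, Finset ι := fun ω =>
    ⟨Finset.univ.filter (ω · ∈ U), Finset.univ.filter (ω · ∈ V)⟩
  let I : Finset (Σ _ : Finset ι, Finset ι) :=
    (Finset.powersetCard a Finset.univ).sigma fun A => Finset.powersetCard b Aᶜ
  have hI {A B : Finset ι} :
      (⟨A, B⟩ : Σ _ : Finset ι, Finset ι) ∈ I ↔ A.card = a ∧ Disjoint A B ∧ B.card = b := by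
    simp [I, Finset.mem_powersetCard, Finset.subset_compl_iff_disjoint_left]
  have hfiber (A B : Finset ι) : positions ⁻¹' {⟨A, B⟩} =
      {ω | Finset.univ.filter (ω · ∈ U) = A ∧ Finset.univ.filter (ω · ∈ V) = B} := by
    ext ω
    simp [positions]
  have hevent : {ω : ι → Ω | (Finset.univ.filter (ω · ∈ U)).card = a ∧
      (Finset.univ.filter (ω · ∈ V)).card = b} = positions ⁻¹' I := by
    ext ω
    have hdisj : Disjoint (Finset.univ.filter (ω · ∈ U)) (Finset.univ.filter (ω · ∈ V)) :=
      Finset.disjoint_filter.2 fun _ _ hkU hkV => Set.disjoint_left.1 hUV hkU hkV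
    simp [positions, hI, hdisj]
  have hmeas : ∀ s ∈ I, MeasurableSet (positions ⁻¹' {s}) := by
    rintro ⟨A, B⟩ hs
    rw [hfiber, setOf_filter_mem_eq_pi hUV (hI.1 hs).2.1]
    refine MeasurableSet.univ_pi fun k => ?_
    split_ifs
    exacts [hU, hV, (hU.union hV).compl]
  have hlaw : ∀ s ∈ I, (Measure.pi fun _ : ι => μ).real (positions ⁻¹' {s}) =
      μ.real U ^ a * μ.real V ^ b * μ.real (U ∪ V)ᶜ ^ (Fintype.card ι - a - b) := by
    rintro ⟨A, B⟩ hs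
    obtain ⟨hA, hAB, hB⟩ := hI.1 hs
    rw [hfiber, measureReal_pi_filter_mem_eq μ hUV hAB, hA, hB]
  rw [hevent, ← sum_measureReal_preimage_singleton I hmeas, Finset.sum_congr rfl hlaw,
    Finset.sum_const, nsmul_eq_mul,
    card_sigma_powersetCard_compl, Nat.cast_mul]

end JointCounts

section Frequencies

variable {P : PMF ℕ} {n : ℕ}

instance : IsProbabilityMeasure (sampleMeasure P n) := by
  unfold sampleMeasure
  infer_instance

theorem sampleMeasure_real_freq_eq_and_freq_eq {i j : ℕ} (hij : i ≠ j) (a b : ℕ) :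
    (sampleMeasure P n).real {ω | freq ω i = a ∧ freq ω j = b} =
      n.choose a * (n - a).choose b *
        (pReal P i ^ a * pReal P j ^ b * (1 - pReal P i - pReal P j) ^ (n - a - b)) := by
  have hdisj : Disjoint ({i} : Set ℕ) {j} := by simpa using hij
  have hcompl : P.toMeasure.real ({i} ∪ {j} : Set ℕ)ᶜ = 1 - pReal P i - pReal P j := by
    rw [probReal_compl_eq_one_sub .of_discrete, measureReal_union hdisj .of_discrete,
      toMeasure_real_singleton, toMeasure_real_singleton, sub_sub]
  have hlaw := measureReal_pi_card_filter_mem_eq (ι := Fin n) P.toMeasure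
    .of_discrete .of_discrete hdisj a b
  rw [hcompl, toMeasure_real_singleton, toMeasure_real_singleton, Fintype.card_fin] at hlaw
  exact hlaw

theorem sampleMeasure_real_freq_eq (j a : ℕ) :
    (sampleMeasure P n).real {ω | freq ω j = a} =
      n.choose a * (pReal P j ^ a * (1 - pReal P j) ^ (n - a)) := by
  have hcompl : P.toMeasure.real ({j} ∪ ∅ : Set ℕ)ᶜ = 1 - pReal P j := by
    rw [Set.union_empty, probReal_compl_eq_one_sub .of_discrete, toMeasure_real_singleton]
  have hlaw := measureReal_pi_card_filter_mem_eq (ι := Fin n) P.toMeasure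
    (.of_discrete (s := {j})) .empty (Set.disjoint_empty _) a 0
  rw [hcompl, toMeasure_real_singleton] at hlaw
  simpa [sampleMeasure, freq] using hlaw

/-- The indicator of the event that symbol `j` occurs exactly `a` times in the sample. -/
def freqIndicator (a j : ℕ) : (Fin n → ℕ) → ℝ :=
  Set.indicator {ω | freq ω j = a} 1

theorem freqIndicator_apply (a j : ℕ) (ω : Fin n → ℕ) :
    freqIndicator a j ω = if freq ω j = a then 1 else 0 := by
  classical exact Set.indicator_apply _ _ _

theorem freqIndicator_nonneg (a j : ℕ) (ω : Fin n → ℕ) : 0 ≤ freqIndicator a j ω :=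
  Set.indicator_nonneg (fun _ _ => zero_le_one) ω

theorem freqIndicator_le_one (a j : ℕ) (ω : Fin n → ℕ) : freqIndicator a j ω ≤ 1 :=
  Set.indicator_le_self' (fun _ _ => zero_le_one) ω

theorem memLp_freqIndicator (a j : ℕ) {p : ENNReal} :
    MemLp (freqIndicator a j) p (sampleMeasure P n) :=
  .of_bound Measurable.of_discrete.aestronglyMeasurable 1 <| .of_forall fun ω => by
    rw [norm_of_nonneg (freqIndicator_nonneg a j ω)]
    exact freqIndicator_le_one a j ω

theorem integral_freqIndicator (a j : ℕ) :
    ∫ ω, freqIndicator a j ω ∂sampleMeasure P n =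
      n.choose a * (pReal P j ^ a * (1 - pReal P j) ^ (n - a)) := by
  rw [← sampleMeasure_real_freq_eq]
  exact integral_indicator_one .of_discrete

theorem integral_freqIndicator_mul {i j : ℕ} (hij : i ≠ j) (a b : ℕ) :
    ∫ ω, freqIndicator a i ω * freqIndicator b j ω ∂sampleMeasure P n =
      n.choose a * (n - a).choose b *
        (pReal P i ^ a * pReal P j ^ b * (1 - pReal P i - pReal P j) ^ (n - a - b)) := by
  rw [← sampleMeasure_real_freq_eq_and_freq_eq hij, Set.ofPred_and]
  simp_rw [← integral_indicator_one MeasurableSet.of_discrete, Set.inter_indicator_one]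
  rfl

end Frequencies

section SecondMoment

open Topology Asymptotics

theorem integral_sum_sq {Ω ι : Type*} [MeasurableSpace Ω] {μ : Measure Ω} {X : ι → Ω → ℝ}
    (hX : ∀ i, MemLp (X i) 2 μ) (J : Finset ι) :
    ∫ ω, (∑ i ∈ J, X i ω) ^ 2 ∂μ = ∑ i ∈ J, ∑ j ∈ J, ∫ ω, X i ω * X j ω ∂μ := by
  have hint (i j : ι) : Integrable (fun ω => X i ω * X j ω) μ := (hX i).integrable_mul (hX j)
  simp_rw [sq, Finset.sum_mul_sum]
  rw [integral_finsetSum _ fun i _ => integrable_finsetSum _ fun j _ => hint i j]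
  exact Finset.sum_congr rfl fun i _ => integral_finsetSum _ fun j _ => hint i j

theorem lintegral_ofReal_le_of_tendsto {Ω : Type*} [MeasurableSpace Ω] {μ : Measure Ω}
    {g : ℕ → Ω → ℝ} {f : Ω → ℝ} {B : ℝ} (hg0 : ∀ N ω, 0 ≤ g N ω) (hg : ∀ N, Integrable (g N) μ)
    (hlim : ∀ ω, Tendsto (fun N => g N ω) atTop (𝓝 (f ω))) (hB : ∀ N, ∫ ω, g N ω ∂μ ≤ B) :
    ∫⁻ ω, ENNReal.ofReal (f ω) ∂μ ≤ ENNReal.ofReal B := by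
  calc ∫⁻ ω, ENNReal.ofReal (f ω) ∂μ
      = ∫⁻ ω, liminf (fun N => ENNReal.ofReal (g N ω)) atTop ∂μ :=
        lintegral_congr fun ω => (ENNReal.tendsto_ofReal (hlim ω)).liminf_eq.symm
    _ ≤ liminf (fun N => ∫⁻ ω, ENNReal.ofReal (g N ω) ∂μ) atTop :=
        lintegral_liminf_le' fun N => (hg N).aemeasurable.ennreal_ofReal
    _ ≤ ENNReal.ofReal B := by
        refine liminf_le_of_frequently_le' (Frequently.of_forall fun N => ?_)
        rw [← ofReal_integral_eq_lintegral_ofReal (hg N) (.of_forall (hg0 N))]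
        exact ENNReal.ofReal_le_ofReal (hB N)

variable {P : PMF ℕ} {r n : ℕ}

theorem hasSum_freqIndicator (hr : r ≠ 0) (ω : Fin n → ℕ) :
    HasSum (fun j => freqIndicator r j ω) (Mcount ω r) := by
  simp only [freqIndicator_apply]
  refine (summable_of_hasFiniteSupport ((Set.finite_range ω).subset fun j hj => ?_)).hasSum
  have hfreq : freq ω j ≠ 0 := by
    rw [(ite_ne_right_iff.1 hj).1]
    exact hr
  obtain ⟨i, hi⟩ := Finset.card_ne_zero.1 hfreq
  exact ⟨i, (Finset.mem_filter.1 hi).2⟩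

theorem hasSum_pReal_pow_mul_freqIndicator (hr : r ≠ 0) (ω : Fin n → ℕ) :
    HasSum (fun j => pReal P j ^ r * freqIndicator 0 j ω) (missingMass (pReal P) r ω) := by
  have hle (j : ℕ) : pReal P j ^ r * freqIndicator 0 j ω ≤ pReal P j :=
    (mul_le_of_le_one_right (pow_nonneg (pReal_nonneg j) r) (freqIndicator_le_one 0 j ω)).trans
      (pow_le_of_le_one (pReal_nonneg j) (pReal_le_one j) hr)
  have hnonneg (j : ℕ) : 0 ≤ pReal P j ^ r * freqIndicator 0 j ω :=
    mul_nonneg (pow_nonneg (pReal_nonneg j) r) (freqIndicator_nonneg 0 j ω)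
  convert! (Summable.of_nonneg_of_le hnonneg hle hasSum_pReal.summable).hasSum using 1
  simp only [missingMass, freqIndicator_apply]

/-- The contribution of symbol `j` to the error `θ̂_r^{GT} - θ_r`. -/
def gtTerm (P : PMF ℕ) (r j : ℕ) (ω : Fin n → ℕ) : ℝ :=
  (n.choose r : ℝ)⁻¹ * freqIndicator r j ω - pReal P j ^ r * freqIndicator 0 j ω

theorem hasSum_gtTerm (hr : r ≠ 0) (ω : Fin n → ℕ) :
    HasSum (fun j => gtTerm P r j ω) (gtEst ω r - missingMass (pReal P) r ω) := by
  rw [gtEst, div_eq_inv_mul]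
  exact ((hasSum_freqIndicator hr ω).mul_left _).sub (hasSum_pReal_pow_mul_freqIndicator hr ω)

theorem memLp_gtTerm (j : ℕ) {p : ENNReal} : MemLp (gtTerm P r j) p (sampleMeasure P n) :=
  ((memLp_freqIndicator r j).const_mul _).sub ((memLp_freqIndicator 0 j).const_mul _)

theorem integral_gtTerm_mul_self_le (hn : 2 * r ≤ n) (j : ℕ) :
    ∫ ω, gtTerm P r j ω * gtTerm P r j ω ∂sampleMeasure P n ≤
      (n.choose r : ℝ)⁻¹ * (pReal P j ^ r * (1 - pReal P j) ^ (n - 2 * r)) +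
        pReal P j ^ (2 * r) * (1 - pReal P j) ^ (n - 2 * r) := by
  have hp := pReal_nonneg (P := P) j
  have hp1 := one_sub_pReal_nonneg (P := P) j
  have hpow {m : ℕ} (hm : n - 2 * r ≤ m) : (1 - pReal P j) ^ m ≤ (1 - pReal P j) ^ (n - 2 * r) :=
    pow_le_pow_of_le_one hp1 (sub_le_self 1 hp) hm
  have hchoose : (0 : ℝ) < n.choose r := mod_cast Nat.choose_pos (by lia)
  have hint (a : ℕ) (c : ℝ) :
      Integrable (fun ω : Fin n → ℕ => c ^ 2 * freqIndicator a j ω) (sampleMeasure P n) :=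
    ((memLp_freqIndicator a j).integrable le_rfl).const_mul _
  have hsq (a : ℕ) (ω : Fin n → ℕ) : freqIndicator a j ω ^ 2 = freqIndicator a j ω := by
    simp [freqIndicator_apply]
  calc ∫ ω, gtTerm P r j ω * gtTerm P r j ω ∂sampleMeasure P n
      ≤ ∫ ω, ((n.choose r : ℝ)⁻¹ ^ 2 * freqIndicator r j ω +
          (pReal P j ^ r) ^ 2 * freqIndicator 0 j ω) ∂sampleMeasure P n := by
        refine integral_mono ((memLp_gtTerm (p := 2) j).integrable_mul (memLp_gtTerm (p := 2) j))
          ((hint _ _).add (hint _ _)) fun ω => ?_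
        have hcross : 0 ≤ (n.choose r : ℝ)⁻¹ * freqIndicator r j ω *
            (pReal P j ^ r * freqIndicator 0 j ω) := by
          have := freqIndicator_nonneg r j ω
          have := freqIndicator_nonneg 0 j ω
          positivity
        rw [← hsq r, ← hsq 0]
        simp only [gtTerm]
        linarith
    _ = (n.choose r : ℝ)⁻¹ * (pReal P j ^ r * (1 - pReal P j) ^ (n - r)) +
          pReal P j ^ (2 * r) * (1 - pReal P j) ^ n := by
        rw [integral_add (hint _ _) (hint _ _), integral_const_mul, integral_const_mul,
          integral_freqIndicator, integral_freqIndicator, Nat.choose_zero_right]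
        field_simp
        simp only [Nat.sub_zero, Nat.cast_one]
        ring
    _ ≤ _ := by
        gcongr ?_ * (_ * ?_) + _ * ?_
        · exact hpow (Nat.sub_le_sub_left (by lia) n)
        · exact hpow (Nat.sub_le n _)

theorem one_sub_pow_sq_le {x : ℝ} (hx0 : 0 ≤ x) (hx1 : x ≤ 1) (r : ℕ) :
    (1 - (1 - x) ^ r) ^ 2 ≤ (r * x) ^ 2 := by
  have hbernoulli := one_add_mul_le_pow (a := -x) (by linarith) r
  refine pow_le_pow_left₀ (sub_nonneg.2 (pow_le_one₀ (by linarith) (by linarith))) ?_ 2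
  rw [← sub_eq_add_neg] at hbernoulli
  linarith

theorem integral_gtTerm_mul {i j : ℕ} (hij : i ≠ j) (hn : 2 * r ≤ n) :
    ∫ ω, gtTerm P r i ω * gtTerm P r j ω ∂sampleMeasure P n =
      pReal P i ^ r * pReal P j ^ r * (1 - pReal P i - pReal P j) ^ (n - 2 * r) *
        ((n - r).choose r / n.choose r - 2 * (1 - pReal P i - pReal P j) ^ r +
          ((1 - pReal P i - pReal P j) ^ r) ^ 2) := by
  obtain ⟨m, rfl⟩ := Nat.exists_eq_add_of_le' hn
  set c : ℝ := (((m + 2 * r).choose r : ℕ) : ℝ) with hc_def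
  have hc : c ≠ 0 := Nat.cast_ne_zero.2 (Nat.choose_pos (by lia)).ne'
  have hint (a b : ℕ) (x : ℝ) :
      Integrable (fun ω : Fin (m + 2 * r) → ℕ => x * (freqIndicator a i ω * freqIndicator b j ω))
        (sampleMeasure P (m + 2 * r)) :=
    ((memLp_freqIndicator (p := 2) a i).integrable_mul
      (memLp_freqIndicator (p := 2) b j)).const_mul x
  have hexpand (ω : Fin (m + 2 * r) → ℕ) : gtTerm P r i ω * gtTerm P r j ω =
      c⁻¹ ^ 2 * (freqIndicator r i ω * freqIndicator r j ω) -
        c⁻¹ * pReal P j ^ r * (freqIndicator r i ω * freqIndicator 0 j ω) -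
        c⁻¹ * pReal P i ^ r * (freqIndicator 0 i ω * freqIndicator r j ω) +
        pReal P i ^ r * pReal P j ^ r * (freqIndicator 0 i ω * freqIndicator 0 j ω) := by
    simp only [gtTerm]
    ring
  simp_rw [hexpand]
  rw [integral_add (((hint _ _ _).sub' (hint _ _ _)).sub' (hint _ _ _)) (hint _ _ _),
    integral_sub ((hint _ _ _).sub' (hint _ _ _)) (hint _ _ _),
    integral_sub (hint _ _ _) (hint _ _ _)]
  simp_rw [integral_const_mul, integral_freqIndicator_mul hij]
  rw [show m + 2 * r - r - r = m by lia, show m + 2 * r - r = m + r by lia, ← hc_def]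
  simp only [Nat.choose_zero_right, Nat.cast_one, pow_zero, Nat.sub_zero,
    show m + 2 * r - r = m + r by lia, Nat.add_sub_cancel]
  field_simp
  ring

theorem sub_two_mul_pow_add_sq_le {p q d : ℝ} (hp : 0 ≤ p) (hq : 0 ≤ q) (hpq : p + q ≤ 1)
    (hd : d ≤ 1) (r : ℕ) :
    d - 2 * (1 - p - q) ^ r + ((1 - p - q) ^ r) ^ 2 ≤ 2 * r ^ 2 * (p ^ 2 + q ^ 2) :=
  calc d - 2 * (1 - p - q) ^ r + ((1 - p - q) ^ r) ^ 2
      ≤ (1 - (1 - (p + q)) ^ r) ^ 2 := by rw [← sub_sub]; linarith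
    _ ≤ (r * (p + q)) ^ 2 := one_sub_pow_sq_le (add_nonneg hp hq) hpq r
    _ = r ^ 2 * (p + q) ^ 2 := mul_pow _ _ _
    _ ≤ r ^ 2 * (2 * (p ^ 2 + q ^ 2)) := by gcongr; exact add_sq_le
    _ = 2 * r ^ 2 * (p ^ 2 + q ^ 2) := by ring

theorem integral_gtTerm_mul_le {i j : ℕ} (hij : i ≠ j) (hn : 2 * r ≤ n) :
    ∫ ω, gtTerm P r i ω * gtTerm P r j ω ∂sampleMeasure P n ≤
      2 * r ^ 2 * (pReal P i ^ (r + 2) * (1 - pReal P i) ^ (n - 2 * r) *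
          (pReal P j ^ r * (1 - pReal P j) ^ (n - 2 * r)) +
        pReal P i ^ r * (1 - pReal P i) ^ (n - 2 * r) *
          (pReal P j ^ (r + 2) * (1 - pReal P j) ^ (n - 2 * r))) := by
  rw [integral_gtTerm_mul hij hn]
  have hd : ((n - r).choose r : ℝ) / n.choose r ≤ 1 :=
    div_le_one_of_le₀ (mod_cast Nat.choose_le_choose r (Nat.sub_le n r)) (Nat.cast_nonneg _)
  have hp := pReal_nonneg (P := P) i
  have hq := pReal_nonneg (P := P) j
  have hpq := pReal_add_le_one (P := P) hij
  set p := pReal P i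
  set q := pReal P j
  set d := ((n - r).choose r : ℝ) / n.choose r
  have hs : 0 ≤ 1 - p - q := by linarith
  calc p ^ r * q ^ r * (1 - p - q) ^ (n - 2 * r) *
        (d - 2 * (1 - p - q) ^ r + ((1 - p - q) ^ r) ^ 2)
      ≤ p ^ r * q ^ r * (1 - p - q) ^ (n - 2 * r) * (2 * r ^ 2 * (p ^ 2 + q ^ 2)) := by
        gcongr
        exact sub_two_mul_pow_add_sq_le hp hq hpq hd r
    _ ≤ p ^ r * q ^ r * ((1 - p) * (1 - q)) ^ (n - 2 * r) * (2 * r ^ 2 * (p ^ 2 + q ^ 2)) := by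
        gcongr
        linarith [mul_nonneg hp hq]
    _ = _ := by rw [mul_pow]; ring

/-- A bound for the mean squared error of the Good–Turing estimator; the three summands come from
the squares of the two parts of `gtTerm` and from the pairs of distinct symbols. -/
def gtErrorBound (P : PMF ℕ) (r n : ℕ) : ℝ :=
  (n.choose r : ℝ)⁻¹ * expMissingMass P r (n - 2 * r) + expMissingMass P (2 * r) (n - 2 * r) +
    4 * r ^ 2 * (expMissingMass P (r + 2) (n - 2 * r) * expMissingMass P r (n - 2 * r))

theorem integral_sum_gtTerm_sq_le (hr : r ≠ 0) (hn : 2 * r ≤ n) (J : Finset ℕ) :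
    ∫ ω, (∑ j ∈ J, gtTerm P r j ω) ^ 2 ∂sampleMeasure P n ≤ gtErrorBound P r n := by
  set f : ℕ → ℕ → ℝ := fun k j => pReal P j ^ k * (1 - pReal P j) ^ (n - 2 * r)
  have hf (k j : ℕ) : 0 ≤ f k j := pReal_pow_mul_one_sub_pow_nonneg j
  have hterm (i j : ℕ) : ∫ ω, gtTerm P r i ω * gtTerm P r j ω ∂sampleMeasure P n ≤
      (if i = j then (n.choose r : ℝ)⁻¹ * f r i + f (2 * r) i else 0) +
        2 * r ^ 2 * (f (r + 2) i * f r j + f r i * f (r + 2) j) := by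
    have hcross : 0 ≤ 2 * (r : ℝ) ^ 2 * (f (r + 2) i * f r j + f r i * f (r + 2) j) :=
      mul_nonneg (by positivity)
        (add_nonneg (mul_nonneg (hf _ _) (hf _ _)) (mul_nonneg (hf _ _) (hf _ _)))
    split_ifs with hij
    · subst hij
      exact (integral_gtTerm_mul_self_le hn i).trans (le_add_of_nonneg_right hcross)
    · rw [zero_add]
      exact integral_gtTerm_mul_le hij hn
  rw [integral_sum_sq fun j => memLp_gtTerm j]
  calc ∑ i ∈ J, ∑ j ∈ J, ∫ ω, gtTerm P r i ω * gtTerm P r j ω ∂sampleMeasure P n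
      ≤ ∑ i ∈ J, ∑ j ∈ J, ((if i = j then (n.choose r : ℝ)⁻¹ * f r i + f (2 * r) i else 0) +
          2 * r ^ 2 * (f (r + 2) i * f r j + f r i * f (r + 2) j)) :=
        Finset.sum_le_sum fun i _ => Finset.sum_le_sum fun j _ => hterm i j
    _ = (n.choose r : ℝ)⁻¹ * ∑ j ∈ J, f r j + ∑ j ∈ J, f (2 * r) j +
          4 * r ^ 2 * ((∑ j ∈ J, f (r + 2) j) * ∑ j ∈ J, f r j) := by
        simp_rw [Finset.sum_add_distrib, ← Finset.mul_sum, Finset.sum_add_distrib,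
          ← Finset.sum_mul_sum, Finset.sum_ite_eq, Finset.sum_ite_mem, Finset.inter_self,
          Finset.sum_add_distrib, ← Finset.mul_sum]
        ring
    _ ≤ gtErrorBound P r n := by
        unfold gtErrorBound
        gcongr
        · exact sum_le_expMissingMass hr J
        · exact sum_le_expMissingMass (by lia) J
        · exact Finset.sum_nonneg fun j _ => hf r j
        · exact expMissingMass_nonneg
        · exact sum_le_expMissingMass (by lia) J
        · exact sum_le_expMissingMass hr J

theorem lintegral_gtEst_sub_missingMass_sq_le (hr : r ≠ 0) (hn : 2 * r ≤ n) :
    ∫⁻ ω, ENNReal.ofReal ((gtEst ω r - missingMass (pReal P) r ω) ^ 2) ∂sampleMeasure P n ≤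
      ENNReal.ofReal (gtErrorBound P r n) := by
  have hmem (N : ℕ) :
      MemLp (fun ω => ∑ j ∈ Finset.range N, gtTerm P r j ω) 2 (sampleMeasure P n) :=
    memLp_finsetSum _ fun j _ => memLp_gtTerm j
  exact lintegral_ofReal_le_of_tendsto (fun N ω => sq_nonneg _) (fun N => (hmem N).integrable_sq)
    (fun ω => (hasSum_gtTerm hr ω).tendsto_sum_nat.pow 2)
    fun N => integral_sum_gtTerm_sq_le hr hn (Finset.range N)

theorem TailSublinear.isBigO_gtErrorBound (hP : TailSublinear P) (hr : r ≠ 0) :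
    gtErrorBound P r =O[atTop] fun n : ℕ => (tailF P (n : ℝ)⁻¹ : ℝ) / ((n : ℝ) ^ r) ^ 2 := by
  have hA (k : ℕ) (hk : k ≠ 0) := hP.isBigO_expMissingMass hk (2 * r)
  have hdiag_seen : (fun n => (n.choose r : ℝ)⁻¹ * expMissingMass P r (n - 2 * r)) =O[atTop]
      fun n : ℕ => (tailF P (n : ℝ)⁻¹ : ℝ) / ((n : ℝ) ^ r) ^ 2 :=
    ((isTheta_choose r).inv.1.mul (hA r hr)).congr_right fun n => by field_simp
  have hdiag_missing : (fun n => expMissingMass P (2 * r) (n - 2 * r)) =O[atTop]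
      fun n : ℕ => (tailF P (n : ℝ)⁻¹ : ℝ) / ((n : ℝ) ^ r) ^ 2 :=
    (hA (2 * r) (by lia)).congr_right fun n => by rw [pow_mul']
  have hF : (fun n : ℕ => (tailF P (n : ℝ)⁻¹ : ℝ) / (n : ℝ) ^ 2) =O[atTop] fun _ => (1 : ℝ) := by
    refine IsBigO.of_bound 1 ?_
    filter_upwards [eventually_gt_atTop 0] with n hn
    have hn1 : (1 : ℝ) ≤ n := mod_cast hn
    have hle := mul_tailF_le_one (P := P) (x := (n : ℝ)⁻¹) (by positivity)
    rw [inv_mul_le_one₀ (by positivity)] at hle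
    rw [norm_of_nonneg (by positivity), norm_one, mul_one]
    exact div_le_one_of_le₀ (hle.trans (le_self_pow₀ hn1 two_ne_zero)) (by positivity)
  have hcross : (fun n => expMissingMass P (r + 2) (n - 2 * r) * expMissingMass P r (n - 2 * r))
      =O[atTop] fun n : ℕ => (tailF P (n : ℝ)⁻¹ : ℝ) / ((n : ℝ) ^ r) ^ 2 := by
    refine ((hA (r + 2) (by lia)).mul (hA r hr)).trans ?_
    exact (hF.mul (isBigO_refl _ _)).congr (fun n => by rw [pow_add]; field_simp)
      fun n => one_mul _
  exact (hdiag_seen.add hdiag_missing).add (hcross.const_mul_left _)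

theorem measure_lt_le_of_lintegral_ofReal_le {Ω : Type*} [MeasurableSpace Ω] {μ : Measure Ω}
    {f : Ω → ℝ} (hf : AEMeasurable f μ) {a ε : ℝ} (ha : 0 < a)
    (hle : ∫⁻ ω, ENNReal.ofReal (f ω) ∂μ ≤ ENNReal.ofReal (ε * a)) :
    μ {ω | a < f ω} ≤ ENNReal.ofReal ε := by
  have ha' : ENNReal.ofReal a ≠ 0 := (ENNReal.ofReal_pos.2 ha).ne'
  calc μ {ω | a < f ω}
      ≤ μ {ω | ENNReal.ofReal a ≤ ENNReal.ofReal (f ω)} :=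
        measure_mono fun ω hω => ENNReal.ofReal_le_ofReal (le_of_lt hω)
    _ ≤ (∫⁻ ω, ENNReal.ofReal (f ω) ∂μ) / ENNReal.ofReal a :=
        meas_ge_le_lintegral_div hf.ennreal_ofReal ha' ENNReal.ofReal_ne_top
    _ ≤ ENNReal.ofReal ε := by
        rwa [ENNReal.div_le_iff ha' ENNReal.ofReal_ne_top, ← ENNReal.ofReal_mul' ha.le]

theorem TailSublinear.exists_eventually_gtEst_sub_missingMass_sq_gt_le (hP : TailSublinear P)
    (hr : r ≠ 0) {ε : ℝ} (hε : 0 < ε) :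
    ∃ K > 0, ∀ᶠ n : ℕ in atTop, sampleMeasure P n
      {ω | K * tailF P (n : ℝ)⁻¹ / ((n : ℝ) ^ r) ^ 2 <
        (gtEst ω r - missingMass (pReal P) r ω) ^ 2} ≤ ENNReal.ofReal ε := by
  obtain ⟨C, hC, hbound⟩ := (hP.isBigO_gtErrorBound hr).exists_pos
  refine ⟨C / ε, by positivity, ?_⟩
  filter_upwards [hbound.bound, eventually_ge_atTop (2 * r), eventually_gt_atTop 0,
    tendsto_natCast_inv_nhdsGT_zero.eventually (eventually_tailF_pos (P := P))]
    with n hn hnr hn0 hpos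
  refine measure_lt_le_of_lintegral_ofReal_le Measurable.of_discrete.aemeasurable
    (by positivity) ((lintegral_gtEst_sub_missingMass_sq_le hr hnr).trans
      (ENNReal.ofReal_le_ofReal ((le_norm_self _).trans (hn.trans_eq ?_))))
  rw [norm_of_nonneg (by positivity)]
  field_simp

end SecondMoment

section LowerBound

variable {P : PMF ℕ} {n : ℕ}

theorem covariance_freqIndicator_zero_nonpos {i j : ℕ} (hij : i ≠ j) :
    cov[freqIndicator 0 i, freqIndicator 0 j; sampleMeasure P n] ≤ 0 := by
  rw [covariance_eq_sub (memLp_freqIndicator 0 i) (memLp_freqIndicator 0 j)]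
  simp only [Pi.mul_apply, integral_freqIndicator_mul hij, integral_freqIndicator,
    Nat.choose_zero_right, Nat.cast_one, pow_zero, one_mul, Nat.sub_zero, ← mul_pow]
  refine sub_nonpos.2 (pow_le_pow_left₀ ?_ ?_ n)
  · linarith [pReal_add_le_one (P := P) hij]
  · linarith [mul_nonneg (pReal_nonneg (P := P) i) (pReal_nonneg (P := P) j)]

theorem variance_freqIndicator_le_one (a j : ℕ) :
    Var[freqIndicator a j; sampleMeasure P n] ≤ 1 := by
  refine (variance_le_expectation_sq Measurable.of_discrete.aestronglyMeasurable).trans ?_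
  refine (integral_mono (memLp_freqIndicator a j).integrable_sq (integrable_const (1 : ℝ))
    fun ω => ?_).trans_eq (by simp)
  exact pow_le_one₀ (freqIndicator_nonneg a j ω) (freqIndicator_le_one a j ω)

theorem variance_sum_freqIndicator_zero_le (J : Finset ℕ) :
    Var[∑ j ∈ J, freqIndicator 0 j; sampleMeasure P n] ≤ J.card := by
  rw [variance_sum' fun j _ => memLp_freqIndicator 0 j]
  calc ∑ i ∈ J, ∑ j ∈ J, cov[freqIndicator 0 i, freqIndicator 0 j; sampleMeasure P n]
      ≤ ∑ i ∈ J, ∑ j ∈ J, if i = j then (1 : ℝ) else 0 := by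
        refine Finset.sum_le_sum fun i _ => Finset.sum_le_sum fun j _ => ?_
        split_ifs with hij
        · rw [hij, covariance_self Measurable.of_discrete.aemeasurable]
          exact variance_freqIndicator_le_one 0 j
        · exact covariance_freqIndicator_zero_nonpos hij
    _ = J.card := by simp

theorem sampleMeasure_sum_freqIndicator_zero_lt_le {κ : ℝ} (hκ : 0 < κ) {J : Finset ℕ}
    (hJ : J.Nonempty) (hunseen : ∀ j ∈ J, κ ≤ (1 - pReal P j) ^ n) :
    sampleMeasure P n {ω | ∑ j ∈ J, freqIndicator 0 j ω < κ / 2 * J.card} ≤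
      ENNReal.ofReal (4 / (κ ^ 2 * J.card)) := by
  have : (0 : ℝ) < J.card := mod_cast hJ.card_pos
  set X : (Fin n → ℕ) → ℝ := ∑ j ∈ J, freqIndicator 0 j
  have hX : MemLp X 2 (sampleMeasure P n) := memLp_finsetSum' _ fun j _ => memLp_freqIndicator 0 j
  have hmean : κ * J.card ≤ ∫ ω, X ω ∂sampleMeasure P n := by
    simp only [X, Finset.sum_apply]
    rw [integral_finsetSum _ fun j _ => (memLp_freqIndicator 0 j).integrable le_rfl, mul_comm,
      ← nsmul_eq_mul]
    refine Finset.card_nsmul_le_sum _ _ _ fun j hj => ?_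
    simpa [integral_freqIndicator] using hunseen j hj
  calc sampleMeasure P n {ω | ∑ j ∈ J, freqIndicator 0 j ω < κ / 2 * J.card}
      ≤ sampleMeasure P n {ω | κ / 2 * J.card ≤ |X ω - ∫ ω, X ω ∂sampleMeasure P n|} := by
        refine measure_mono fun ω hω => ?_
        have hω : X ω < κ / 2 * J.card := by simpa [X] using hω
        rw [Set.mem_ofPred_eq, abs_sub_comm]
        exact le_trans (by linarith) (le_abs_self _)
    _ ≤ ENNReal.ofReal (Var[X; sampleMeasure P n] / (κ / 2 * J.card) ^ 2) :=
        meas_ge_le_variance_div_sq hX (by positivity)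
    _ ≤ ENNReal.ofReal (J.card / (κ / 2 * J.card) ^ 2) := by
        gcongr
        exact variance_sum_freqIndicator_zero_le J
    _ = ENNReal.ofReal (4 / (κ ^ 2 * J.card)) := by
        congr 1
        field_simp
        norm_num

theorem pow_mul_sum_freqIndicator_le_missingMass {r : ℕ} (hr : r ≠ 0) {a : ℝ} (ha : 0 ≤ a)
    {J : Finset ℕ} (hJ : ∀ j ∈ J, a ≤ pReal P j) (ω : Fin n → ℕ) :
    a ^ r * ∑ j ∈ J, freqIndicator 0 j ω ≤ missingMass (pReal P) r ω := by
  rw [Finset.mul_sum]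
  calc ∑ j ∈ J, a ^ r * freqIndicator 0 j ω
      ≤ ∑ j ∈ J, pReal P j ^ r * freqIndicator 0 j ω :=
        Finset.sum_le_sum fun j hj => mul_le_mul_of_nonneg_right
          (pow_le_pow_left₀ ha (hJ j hj) r) (freqIndicator_nonneg 0 j ω)
    _ ≤ missingMass (pReal P) r ω :=
        sum_le_hasSum J (fun j _ => mul_nonneg (pow_nonneg (pReal_nonneg j) r)
          (freqIndicator_nonneg 0 j ω)) (hasSum_pReal_pow_mul_freqIndicator hr ω)

theorem sampleMeasure_missingMass_lt_le {r : ℕ} (hr : r ≠ 0) {a κ : ℝ} (ha : 0 ≤ a) (hκ : 0 < κ)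
    {J : Finset ℕ} (hJ : J.Nonempty) (hJa : ∀ j ∈ J, a ≤ pReal P j)
    (hunseen : ∀ j ∈ J, κ ≤ (1 - pReal P j) ^ n) :
    sampleMeasure P n {ω | missingMass (pReal P) r ω < a ^ r * (κ / 2 * J.card)} ≤
      ENNReal.ofReal (4 / (κ ^ 2 * J.card)) := by
  refine (measure_mono fun ω hω => ?_).trans
    (sampleMeasure_sum_freqIndicator_zero_lt_le hκ hJ hunseen)
  have hω : missingMass (pReal P) r ω < a ^ r * (κ / 2 * J.card) := hω
  exact lt_of_mul_lt_mul_left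
    ((pow_mul_sum_freqIndicator_le_missingMass hr ha hJa ω).trans_lt hω) (by positivity)

theorem eventually_exp_neg_two_le_one_sub_inv_pow :
    ∀ᶠ n : ℕ in atTop, exp (-2) ≤ (1 - (n : ℝ)⁻¹) ^ n := by
  have hlim := tendsto_one_add_div_pow_exp (-1)
  filter_upwards [hlim.eventually_const_le (exp_lt_exp.2 (by norm_num : (-2 : ℝ) < -1))] with n hn
  rwa [neg_div, one_div, ← sub_eq_add_neg] at hn

theorem TailGrows.exists_eventually_missingMass_lt_le (hP : TailGrows P) {r : ℕ} (hr : r ≠ 0) :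
    ∃ c > 0, ∀ ε > 0, ∀ᶠ n : ℕ in atTop, sampleMeasure P n
      {ω | missingMass (pReal P) r ω < c * tailF P (n : ℝ)⁻¹ / (n : ℝ) ^ r} ≤
        ENNReal.ofReal ε := by
  obtain ⟨c, hc, hwindow⟩ := hP.exists_finset
  set κ := exp (-2)
  have hκ : 0 < κ := exp_pos _
  refine ⟨c ^ r * (κ / 2), by positivity, fun ε hε => ?_⟩
  have hlarge := (tendsto_natCast_atTop_atTop (R := ℝ)).comp
    (hP.tendsto_tailF.comp tendsto_natCast_inv_nhdsGT_zero)
  filter_upwards [tendsto_natCast_inv_nhdsGT_zero.eventually hwindow,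
    eventually_exp_neg_two_le_one_sub_inv_pow, hlarge.eventually_ge_atTop (4 / (κ ^ 2 * ε)),
    hlarge.eventually_gt_atTop 0] with n ⟨S, hS, hcard⟩ hexp hF hF0
  replace hcard : (tailF P (n : ℝ)⁻¹ : ℝ) ≤ S.card := mod_cast hcard
  have hS0 : (0 : ℝ) < S.card := hF0.trans_le hcard
  have hunseen : ∀ j ∈ S, κ ≤ (1 - pReal P j) ^ n := fun j hj =>
    hexp.trans (pow_le_pow_left₀ (sub_nonneg.2 (Nat.cast_inv_le_one n))
      (sub_le_sub_left (hS j hj).2 1) n)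
  calc sampleMeasure P n
        {ω | missingMass (pReal P) r ω < c ^ r * (κ / 2) * tailF P (n : ℝ)⁻¹ / (n : ℝ) ^ r}
      ≤ sampleMeasure P n
          {ω | missingMass (pReal P) r ω < (c * (n : ℝ)⁻¹) ^ r * (κ / 2 * S.card)} := by
        refine measure_mono (Set.ofPred_subset_ofPred.2 fun ω hω => hω.trans_le ?_)
        calc c ^ r * (κ / 2) * tailF P (n : ℝ)⁻¹ / (n : ℝ) ^ r
            = (c * (n : ℝ)⁻¹) ^ r * (κ / 2 * tailF P (n : ℝ)⁻¹) := by rw [mul_pow, inv_pow]; ring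
          _ ≤ (c * (n : ℝ)⁻¹) ^ r * (κ / 2 * S.card) := by gcongr
    _ ≤ ENNReal.ofReal (4 / (κ ^ 2 * S.card)) :=
        sampleMeasure_missingMass_lt_le hr (by positivity) hκ
          (Finset.card_pos.1 (mod_cast hS0)) (fun j hj => (hS j hj).1.le) hunseen
    _ ≤ ENNReal.ofReal ε := by
        rw [div_le_iff₀ (by positivity)] at hF
        refine ENNReal.ofReal_le_ofReal ((div_le_iff₀ (by positivity)).2 ?_)
        calc 4 ≤ tailF P (n : ℝ)⁻¹ * (κ ^ 2 * ε) := hF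
          _ ≤ S.card * (κ ^ 2 * ε) := by gcongr
          _ = ε * (κ ^ 2 * S.card) := by ring

end LowerBound

theorem sqrt_mul_mloss_le (h : ℝ → ℝ) {v F N a K c t θ : ℝ} (hF : 0 < F) (hN : 0 < N)
    (ha : 0 ≤ a) (hc : 0 < c) (hv : v ≤ a * F) (hθ : c * F / N ≤ θ)
    (ht : (t - θ) ^ 2 ≤ K * F / N ^ 2) : √v * mloss h t θ ≤ √(a * K) / c := by
  have hθ0 : 0 < θ := lt_of_lt_of_le (by positivity) hθ
  have hdev : |t - θ| ≤ √(K * F) / N := by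
    rw [← sqrt_sq_eq_abs, ← sqrt_sq hN.le, ← sqrt_div' _ (sq_nonneg N)]
    exact sqrt_le_sqrt ht
  calc √v * mloss h t θ = √v * (|t - θ| / θ) := by
        rw [mloss, if_pos hθ0, div_sub_one hθ0.ne', abs_div, abs_of_pos hθ0]
    _ ≤ √(a * F) * (√(K * F) / N / (c * F / N)) := by gcongr
    _ = √(a * K) * (√F * √F) / (c * F) := by
        rw [sqrt_mul ha, sqrt_mul ha, sqrt_mul' K hF.le]
        field_simp
    _ = √(a * K) / c := by
        rw [mul_self_sqrt hF.le]
        field_simp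

theorem gtEst_consistent_regularly_varying_general (P : PMF ℕ) (hgrow : TailGrows P)
    (hsub : TailSublinear P) (v : ℕ → ℝ)
    (hv : v =O[atTop] fun n : ℕ => (tailF P (n : ℝ)⁻¹ : ℝ))
    (r : ℕ) (hr : 1 ≤ r) (h : ℝ → ℝ) (δ : ℝ) (hδ : 0 < δ) :
    ∃ M > (0 : ℝ), ∃ N : ℕ, ∀ n ≥ N,
      sampleMeasure P n
        {ω | √(v n) * mloss h (gtEst ω r) (missingMass (pReal P) r ω) > M}
        ≤ ENNReal.ofReal δ := by
  have hr : r ≠ 0 := Nat.one_le_iff_ne_zero.1 hr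
  obtain ⟨a, ha, hbound⟩ := hv.exists_pos
  obtain ⟨c, hc, hlower⟩ := hgrow.exists_eventually_missingMass_lt_le hr
  obtain ⟨K, hK, hdev⟩ :=
    hsub.exists_eventually_gtEst_sub_missingMass_sq_gt_le hr (half_pos hδ)
  refine ⟨√(a * K) / c, by positivity, eventually_atTop.1 ?_⟩
  filter_upwards [hbound.bound, hlower (δ / 2) (half_pos hδ), hdev, eventually_gt_atTop 0,
    tendsto_natCast_inv_nhdsGT_zero.eventually (eventually_tailF_pos (P := P))]
    with n hvn hlowern hdevn hn hF
  rw [norm_natCast] at hvn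
  rw [← add_halves δ, ENNReal.ofReal_add (half_pos hδ).le (half_pos hδ).le]
  refine (measure_mono fun ω hω => ?_).trans
    ((measure_union_le _ _).trans (add_le_add hlowern hdevn))
  by_contra! hgood
  simp only [Set.mem_union, Set.mem_ofPred_eq, not_or, not_lt] at hgood
  exact not_le_of_gt hω (sqrt_mul_mloss_le h (mod_cast hF) (by positivity) ha.le hc
    ((le_norm_self _).trans hvn) hgood.1 hgood.2)

/-- If `P` has regularly varying tails with index `α ∈ (0,1)` and slowly varying part `L`,
then `√(n^α L(n)) · ℓ(θ̂_r^{GT}(X_n), θ_r(P;X_n)) = O_P(1)` as `n → ∞`. -/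
theorem gtEst_consistent_regularly_varying (P : PMF ℕ) (α : ℝ) (hα : α ∈ Set.Ioo (0 : ℝ) 1)
    (L : ℝ → ℝ) (hLpos : ∀ t > 0, 0 < L t)
    (hSlow : ∀ z > 0, Tendsto (fun t => L (t * z) / L t) atTop (nhds 1))
    (hRV : Tendsto (fun x => (tailF P x : ℝ) / (x ^ (-α) * L (1 / x)))
      (nhdsWithin 0 (Set.Ioi 0)) (nhds 1))
    (r : ℕ) (hr : 1 ≤ r) (h : ℝ → ℝ) (δ : ℝ) (hδ : 0 < δ) :
    ∃ M > (0 : ℝ), ∃ N : ℕ, ∀ n ≥ N,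
      sampleMeasure P n
        {ω | Real.sqrt ((n : ℝ) ^ α * L n) *
              mloss h (gtEst ω r) (missingMass (pReal P) r ω) > M}
        ≤ ENNReal.ofReal δ :=
  have hratio (z : ℝ) (hz : z > 0) := tendsto_div_of_slowlyVarying hSlow hRV hz
  gtEst_consistent_regularly_varying_general P (tailGrows_of_tendsto_div hα.1 hratio)
    (tailSublinear_of_tendsto_div hα.2 hratio) _ (isBigO_natCast_inv_of_tendsto_div hRV)
    r hr h δ hδ

end
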